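/- Let l ≥ 1 players each have strategy space ℝⁿ (EuclideanSpace ℝ (Fin n)). For each i ∈ Fin l let A i ⊆ ℝⁿ be nonempty, compact and convex, let qᵢ : ℝⁿ → ℝ be convex and continuous, and let fᵢ : (Fin l → ℝⁿ) → ℝ be continuously differentiable with fᵢ convex in the player's own variable: for every profile x, xᵢ ↦ fᵢ(x with i-th component replaced by xᵢ) is convex. Let (x^k)_{k≥1} be a Gauss–Seidel sequence: for every k ≥ 1 and every i, x^k_i ∈ argmin over xᵢ ∈ A i of fᵢ(x^k_1, …, x^k_{i−1}, xᵢ, x^{k−1}_{i+1}, …, x^{k−1}_l) + qᵢ(xᵢ). If x^k converges as k → ∞ to some x* = (x*_1, …, x*_l), then x* is a Nash equilibrium: for every i, x*_i minimizes xᵢ ↦ fᵢ(x* with i-th component replaced by xᵢ) + qᵢ(xᵢ) over A i. -/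

import Mathlib

/-!
A player's best-response correspondence has a closed graph, because his objective is continuous and
his strategy set closed. The profile against which player `i` reacts at step `k` mixes components of
two consecutive iterates, so it converges to the same limit as the iterates themselves. Passing to
the limit in the Gauss–Seidel step, every component of the limit is a best response to the limit.
-/

open Filter Function Set Topology

section Game

variable {ι R : Type*} {E : ι → Type*} [DecidableEq ι] [LE R]

/-- The strategy `y` of player `i` is a best response to the profile `p`: it minimizes his objective
`u` over his strategy set `S` when the other players keep their strategies in `p`. The component
`p i` is irrelevant. -/
def IsBestResponse (i : ι) (S : Set (E i)) (u : (∀ j, E j) → R) (p : ∀ j, E j) (y : E i) : Prop :=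
  y ∈ S ∧ ∀ z ∈ S, u (update p i y) ≤ u (update p i z)

theorem isBestResponse_add_own_iff [Add R] {i : ι} {S : Set (E i)} {f : (∀ j, E j) → R}
    {q : E i → R} {p : ∀ j, E j} {y : E i} :
    IsBestResponse i S (fun x => f x + q (x i)) p y ↔
      y ∈ S ∧ ∀ z ∈ S, f (update p i y) + q y ≤ f (update p i z) + q z := by
  simp only [IsBestResponse, update_self]

/-- A Nash equilibrium of the game in which each player `i` minimizes `u i` over `A i`: a profile
whose every component is a best response to the profile itself. -/
def IsNashEquilibrium (A : ∀ i, Set (E i)) (u : ι → (∀ j, E j) → R) (x : ∀ j, E j) : Prop :=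
  ∀ i, IsBestResponse i (A i) (u i) x (x i)

/-- The profile that player `i` faces during a Gauss–Seidel sweep: the players before `i` have
already moved from `old` to `new`. The component at `i` itself is the old one. -/
def gaussSeidelProfile [LT ι] [DecidableLT ι] (old new : ∀ j, E j) (i : ι) : ∀ j, E j :=
  fun j => if j < i then new j else old j

/-- A sequence of profiles generated by the Gauss–Seidel method from an arbitrary, not necessarily
feasible, starting profile `x 0`. -/
def IsGaussSeidelSequence [LT ι] [DecidableLT ι] (A : ∀ i, Set (E i)) (u : ι → (∀ j, E j) → R)
    (x : ℕ → ∀ j, E j) : Prop :=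
  ∀ k i, IsBestResponse i (A i) (u i) (gaussSeidelProfile (x k) (x (k + 1)) i) (x (k + 1) i)

end Game

section Limits

variable {α ι R : Type*} {E : ι → Type*} [∀ i, TopologicalSpace (E i)] {a : Filter α}

theorem tendsto_gaussSeidelProfile [LT ι] [DecidableLT ι] {old new : α → ∀ j, E j} {p : ∀ j, E j}
    (hold : Tendsto old a (𝓝 p)) (hnew : Tendsto new a (𝓝 p)) (i : ι) :
    Tendsto (fun t => gaussSeidelProfile (old t) (new t) i) a (𝓝 p) := by
  refine tendsto_pi_nhds.2 fun j => ?_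
  by_cases hj : j < i
  · simpa only [gaussSeidelProfile, if_pos hj] using hnew.apply_nhds j
  · simpa only [gaussSeidelProfile, if_neg hj] using hold.apply_nhds j

variable [DecidableEq ι] [TopologicalSpace R] [Preorder R] [OrderClosedTopology R]

theorem IsBestResponse.of_tendsto [NeBot a] {i : ι} {S : Set (E i)} {u : (∀ j, E j) → R}
    {p : α → ∀ j, E j} {p₀ : ∀ j, E j} {y : α → E i} {y₀ : E i} (hS : IsClosed S)
    (hu : Continuous u) (hp : Tendsto p a (𝓝 p₀)) (hy : Tendsto y a (𝓝 y₀))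
    (hbest : ∀ᶠ t in a, IsBestResponse i S u (p t) (y t)) : IsBestResponse i S u p₀ y₀ := by
  refine ⟨hS.mem_of_tendsto hy (hbest.mono fun _ ht => ht.1), fun z hz => ?_⟩
  have hleft : Tendsto (fun t => u (update (p t) i (y t))) a (𝓝 (u (update p₀ i y₀))) :=
    (hu.tendsto _).comp (hp.update i hy)
  have hright : Tendsto (fun t => u (update (p t) i z)) a (𝓝 (u (update p₀ i z))) :=
    (hu.tendsto _).comp (hp.update i tendsto_const_nhds)
  exact le_of_tendsto_of_tendsto hleft hright (hbest.mono fun _ ht => ht.2 z hz)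

theorem gauss_seidel_limit_is_nash_general [LT ι] [DecidableLT ι] {A : ∀ i, Set (E i)}
    {u : ι → (∀ j, E j) → R} {x : ℕ → ∀ j, E j} {xs : ∀ j, E j} (hA : ∀ i, IsClosed (A i))
    (hu : ∀ i, Continuous (u i)) (hx : IsGaussSeidelSequence A u x)
    (hlim : Tendsto x atTop (𝓝 xs)) : IsNashEquilibrium A u xs := by
  intro i
  have hlim_succ : Tendsto (fun k => x (k + 1)) atTop (𝓝 xs) := (tendsto_add_atTop_iff_nat 1).2 hlim
  exact .of_tendsto (hA i) (hu i) (tendsto_gaussSeidelProfile hlim hlim_succ i)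
    (hlim_succ.apply_nhds i) (.of_forall fun k => hx k i)

end Limits

/-- Theorem 4 of the paper: convergence of the nonsmooth Gauss–Seidel method.
If the Gauss–Seidel sequence `x k` (each player `i` consecutively minimizing his
own objective with the already-updated strategies of the preceding players and
the previous strategies of the remaining players) converges to some `xs`, then
`xs` is a Cournot–Nash equilibrium. -/
theorem gauss_seidel_limit_is_nash
    (n l : ℕ) (hl : 1 ≤ l)
    (A : Fin l → Set (EuclideanSpace ℝ (Fin n)))
    (f : Fin l → (Fin l → EuclideanSpace ℝ (Fin n)) → ℝ)
    (q : Fin l → EuclideanSpace ℝ (Fin n) → ℝ)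
    (hAne : ∀ i, (A i).Nonempty)
    (hAcomp : ∀ i, IsCompact (A i))
    (hAconv : ∀ i, Convex ℝ (A i))
    (hqconv : ∀ i, ConvexOn ℝ Set.univ (q i))
    (hqcont : ∀ i, Continuous (q i))
    (hf : ∀ i, ContDiff ℝ 1 (f i))
    (hfconv : ∀ i, ∀ x : Fin l → EuclideanSpace ℝ (Fin n),
      ConvexOn ℝ Set.univ (fun xi => f i (Function.update x i xi)))
    (x : ℕ → Fin l → EuclideanSpace ℝ (Fin n))
    -- the Gauss–Seidel iteration: for k ≥ 1, x k i minimizes player i's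
    -- objective given x k 1, …, x k (i-1) and x (k-1) (i+1), …, x (k-1) l
    (hgs : ∀ k : ℕ, 1 ≤ k → ∀ i : Fin l,
      x k i ∈ A i ∧
      ∀ xi ∈ A i,
        f i (Function.update (fun j => if j < i then x k j else x (k - 1) j) i (x k i))
            + q i (x k i)
          ≤ f i (Function.update (fun j => if j < i then x k j else x (k - 1) j) i xi)
            + q i xi)
    (xs : Fin l → EuclideanSpace ℝ (Fin n))
    (hconv : Filter.Tendsto x Filter.atTop (nhds xs)) :
    (∀ i, xs i ∈ A i) ∧
    ∀ i, ∀ xi ∈ A i, f i xs + q i (xs i) ≤ f i (Function.update xs i xi) + q i xi := by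
  have hgsSeq : IsGaussSeidelSequence A (fun i p => f i p + q i (p i)) x := fun k i =>
    isBestResponse_add_own_iff.2 (hgs (k + 1) k.succ_pos i)
  have hnash : IsNashEquilibrium A (fun i p => f i p + q i (p i)) xs :=
    gauss_seidel_limit_is_nash_general (fun i => (hAcomp i).isClosed)
      (fun i => (hf i).continuous.add ((hqcont i).comp (continuous_apply i))) hgsSeq hconv
  simpa only [IsNashEquilibrium, isBestResponse_add_own_iff, update_eq_self, forall_and] using hnash
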